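/- Let D be the open unit disk spanning the unit circle C in the xy-plane of ℝ³. If γ : [0,1] → ℝ³ \ C is a path disjoint from C with γ(0) = γ(1) that is disjoint from D as well, then γ is null-homotopic in ℝ³ \ C. -/

import Mathlib

open Set in
theorem vk_loop {X : Type*} [TopologicalSpace X] (U V : Set X) (hUo : IsOpen U) (hVo : IsOpen V)
    (hU : ∀ (a b : X) (p q : Path a b), (∀ t, p t ∈ U) → (∀ t, q t ∈ U) → p.Homotopic q)
    (hV : ∀ (a b : X) (p q : Path a b), (∀ t, p t ∈ V) → (∀ t, q t ∈ V) → p.Homotopic q)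
    (cU : IsPathConnected U) (cV : IsPathConnected V) (cUV : IsPathConnected (U ∩ V))
    (x : X) (γ : Path x x) (hγ : ∀ t, γ t ∈ U ∪ V) : γ.Homotopic (Path.refl x) := by
  obtain ⟨b, hb⟩ := cUV.nonempty
  have hc : ∀ a, ∃ c : a ∈ U ∪ V → Path b a, ∀ h, (a ∈ U → ∀ t, c h t ∈ U) ∧
      (a ∈ V → ∀ t, c h t ∈ V) := by
    intro a
    by_cases h1 : a ∈ U <;> by_cases h2 : a ∈ V
    · obtain ⟨c, hc⟩ := cUV.joinedIn b hb a ⟨h1, h2⟩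
      exact ⟨fun _ => c, fun _ => ⟨fun _ t => (hc t).1, fun _ t => (hc t).2⟩⟩
    · obtain ⟨c, hc⟩ := cU.joinedIn b hb.1 a h1
      exact ⟨fun _ => c, fun _ => ⟨fun _ t => hc t, fun h => absurd h h2⟩⟩
    · obtain ⟨c, hc⟩ := cV.joinedIn b hb.2 a h2
      exact ⟨fun _ => c, fun _ => ⟨fun h => absurd h h1, fun _ t => hc t⟩⟩
    · exact ⟨fun h => absurd h (by simp [h1, h2]), fun h => absurd h (by simp [h1, h2])⟩
  choose c hc using hc
  -- pieces lying in one of the two sets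
  have key : ∀ s t : unitInterval, s ≤ t → ((∀ r ∈ Icc s t, γ r ∈ U) ∨ (∀ r ∈ Icc s t, γ r ∈ V)) →
      ((c (γ s) (hγ s)).trans (γ.subpath s t)).Homotopic (c (γ t) (hγ t)) := by
    intro s t hst h
    have hr : ∀ r, ∃ r' ∈ Icc s t, γ r' = γ.subpath s t r := by
      intro r
      have := Path.range_subpath_of_le γ s t hst
      have h2 : γ.subpath s t r ∈ range (γ.subpath s t) := ⟨r, rfl⟩
      rw [this] at h2
      exact h2
    rcases h with h | h
    · apply hU
      · intro r
        have : ((c (γ s) (hγ s)).trans (γ.subpath s t)) r ∈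
          range ((c (γ s) (hγ s)).trans (γ.subpath s t)) := ⟨r, rfl⟩
        rw [Path.trans_range] at this
        rcases this with ⟨r', h'⟩ | ⟨r', h'⟩
        · rw [← h']; exact (hc _ _).1 (h s ⟨le_rfl, hst⟩) r'
        · rw [← h']; obtain ⟨q, hq, e⟩ := hr r'; rw [← e]; exact h q hq
      · exact (hc _ _).1 (h t ⟨hst, le_rfl⟩)
    · apply hV
      · intro r
        have : ((c (γ s) (hγ s)).trans (γ.subpath s t)) r ∈
          range ((c (γ s) (hγ s)).trans (γ.subpath s t)) := ⟨r, rfl⟩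
        rw [Path.trans_range] at this
        rcases this with ⟨r', h'⟩ | ⟨r', h'⟩
        · rw [← h']; exact (hc _ _).2 (h s ⟨le_rfl, hst⟩) r'
        · rw [← h']; obtain ⟨q, hq, e⟩ := hr r'; rw [← e]; exact h q hq
      · exact (hc _ _).2 (h t ⟨hst, le_rfl⟩)
  obtain ⟨t, t0, tm, ⟨N, hN⟩, ht⟩ := exists_monotone_Icc_subset_open_cover_unitInterval
    (c := fun i : Bool => γ ⁻¹' (if i then U else V))
    (by intro i; cases i
        · exact hVo.preimage γ.continuous
        · exact hUo.preimage γ.continuous)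
    (by intro s _
        rcases hγ s with h | h
        · exact mem_iUnion.2 ⟨true, h⟩
        · exact mem_iUnion.2 ⟨false, h⟩)
  have main : ∀ n, ((c (γ 0) (hγ 0)).trans (γ.subpath 0 (t n))).Homotopic (c (γ (t n)) (hγ _)) := by
    intro n
    induction n with
    | zero =>
      rw [t0, Path.subpath_self]
      exact ⟨Path.Homotopy.transRefl _⟩
    | succ n ih =>
      have h1 := key (t n) (t (n+1)) (tm n.le_succ) (by
        obtain ⟨i, hi⟩ := ht n
        cases i
        · right; exact fun r hr => hi hr
        · left; exact fun r hr => hi hr)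
      refine Path.Homotopic.trans ?_ h1
      refine Path.Homotopic.trans ?_ (Path.Homotopic.hcomp ih (Path.Homotopic.refl _))
      refine Path.Homotopic.trans ?_ (Path.Homotopic.symm ⟨Path.Homotopy.transAssoc _ _ _⟩)
      exact Path.Homotopic.hcomp (Path.Homotopic.refl _)
        (Path.Homotopic.symm ⟨Path.Homotopy.subpathTransSubpath γ _ _ _⟩)
  have h1 := main N
  rw [hN N le_rfl, Path.subpath_zero_one] at h1
  have gen : ∀ (y z : X) (p : Path b y) (q : Path b z) (hy : y = x) (hz : z = x)
    (_ : HEq p q), (p.trans (γ.cast hy hz)).Homotopic q → γ.Homotopic (Path.refl x) := by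
    intro y z p q hy hz e h
    subst hy
    subst hz
    obtain rfl := eq_of_heq e
    have h2 : (p.symm.trans (p.trans γ)).Homotopic (p.symm.trans p) :=
      Path.Homotopic.hcomp (Path.Homotopic.refl _) h
    have h3 : (p.symm.trans p).Homotopic (Path.refl _) :=
      Path.Homotopic.symm ⟨Path.Homotopy.reflSymmTrans p⟩
    refine Path.Homotopic.trans ?_ (h2.trans h3)
    refine Path.Homotopic.trans ?_ ⟨Path.Homotopy.transAssoc _ _ _⟩
    refine Path.Homotopic.trans ?_ (Path.Homotopic.hcomp h3.symm (Path.Homotopic.refl _))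
    exact Path.Homotopic.symm ⟨Path.Homotopy.reflTrans _⟩
  refine gen _ _ _ _ γ.source γ.target ?_ h1
  have : γ 0 = γ 1 := γ.source.trans γ.target.symm
  congr 1
  exact proof_irrel_heq _ _

theorem thin_of_starConvex {E : Type*} [AddCommGroup E] [Module ℝ E] [TopologicalSpace E]
    [ContinuousAdd E] [ContinuousSMul ℝ E] (S W : Set E) (hSW : W ⊆ S) (x : E)
    (h : StarConvex ℝ x W) (a b : S) (p q : Path a b)
    (hp : ∀ t, (p t : E) ∈ W) (hq : ∀ t, (q t : E) ∈ W) : p.Homotopic q := by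
  have ha : (a : E) ∈ W := by simpa using hp 0
  have hb : (b : E) ∈ W := by simpa using hp 1
  have := h.contractibleSpace ⟨_, ha⟩
  let L : ∀ r : Path a b, (∀ t, (r t : E) ∈ W) → Path (⟨a, ha⟩ : W) ⟨b, hb⟩ := fun r hr =>
    { toFun := fun t => ⟨r t, hr t⟩
      continuous_toFun := by fun_prop
      source' := by simp
      target' := by simp }
  have h1 := SimplyConnectedSpace.paths_homotopic (L p hp) (L q hq)
  exact h1.map ⟨Set.inclusion hSW, continuous_inclusion hSW⟩

abbrev UU : Set (EuclideanSpace ℝ (Fin 3)) := {x | 0 < x 2 ∨ (1 - x 2) ^ 2 < x 0 ^ 2 + x 1 ^ 2}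
abbrev VV : Set (EuclideanSpace ℝ (Fin 3)) := {x | x 2 < 0 ∨ (1 + x 2) ^ 2 < x 0 ^ 2 + x 1 ^ 2}

theorem starUU : StarConvex ℝ !₂[0, 0, (1 : ℝ)] UU := by
  intro x hx a b ha hb hab
  simp only [UU, Set.mem_ofPred_eq, PiLp.add_apply, PiLp.smul_apply, smul_eq_mul] at hx ⊢
  simp
  rcases hb.eq_or_lt with rfl | hb'
  · left; simp at hab; simp [hab]
  · rcases hx with h | h
    · left; positivity
    · right
      have e : 1 - (a + b * x 2) = b * (1 - x 2) := by linear_combination -hab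
      rw [e]
      nlinarith [mul_lt_mul_of_pos_left h (pow_pos hb' 2)]

theorem starVV : StarConvex ℝ !₂[0, 0, (-1 : ℝ)] VV := by
  intro x hx a b ha hb hab
  simp only [VV, Set.mem_ofPred_eq, PiLp.add_apply, PiLp.smul_apply, smul_eq_mul] at hx ⊢
  simp
  rcases hb.eq_or_lt with rfl | hb'
  · left; simp at hab; simp [hab]
  · rcases hx with h | h
    · left; nlinarith [mul_pos_of_neg_of_neg h (neg_lt_zero.2 hb')]
    · right
      have e : 1 + (-a + b * x 2) = b * (1 + x 2) := by linear_combination -hab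
      rw [e]
      nlinarith [mul_lt_mul_of_pos_left h (pow_pos hb' 2)]

theorem pcUV : IsPathConnected (UU ∩ VV) := by
  have hs : Convex ℝ {p : ℝ × ℝ × ℝ | 0 < p.2.1} := by
    intro p hp q hq a b ha hb hab
    simp only [Set.mem_ofPred_eq, Prod.snd_add, Prod.fst_add, Prod.smul_snd, Prod.smul_fst,
      smul_eq_mul] at *
    rcases ha.eq_or_lt with rfl | h
    · simp at hab; simp [hab, hq]
    · positivity
  have hpc := hs.isPathConnected ⟨(0, 1, 0), by simp⟩
  have := hpc.image (f := fun p : ℝ × ℝ × ℝ => (!₂[(1 + |p.2.2| + p.2.1) * Real.cos p.1,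
    (1 + |p.2.2| + p.2.1) * Real.sin p.1, p.2.2] : EuclideanSpace ℝ (Fin 3))) (by
      refine (PiLp.continuous_toLp 2 _).comp ?_
      refine continuous_pi fun i => ?_
      fin_cases i <;> simp <;> fun_prop)
  convert this using 1
  ext x
  constructor
  · rintro ⟨h1, h2⟩
    have h : (1 + |x 2|) ^ 2 < x 0 ^ 2 + x 1 ^ 2 := by
      simp only [UU, VV, Set.mem_ofPred_eq] at h1 h2
      rcases abs_cases (x 2) with ⟨e, h⟩ | ⟨e, h⟩ <;> rw [e]
      · rcases h2 with h2 | h2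
        · linarith
        · exact h2
      · rcases h1 with h1 | h1
        · linarith
        · simpa [sub_eq_add_neg] using h1
    let z : ℂ := ⟨x 0, x 1⟩
    have hz : ‖z‖ ^ 2 = x 0 ^ 2 + x 1 ^ 2 := by
      rw [Complex.sq_norm, Complex.normSq_apply]; ring
    have hz' : 1 + |x 2| < ‖z‖ := by
      apply lt_of_pow_lt_pow_left₀ 2 (norm_nonneg _); rwa [hz]
    refine ⟨(z.arg, ‖z‖ - (1 + |x 2|), x 2), by simpa using hz', ?_⟩
    ext i
    fin_cases i
    · simp [z]
    · simp [z]
    · simp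
  · rintro ⟨⟨θ, s, z⟩, hs, rfl⟩
    simp only [Set.mem_ofPred_eq] at hs
    have e : ((1 + |z| + s) * Real.cos θ) ^ 2 + ((1 + |z| + s) * Real.sin θ) ^ 2
        = (1 + |z| + s) ^ 2 := by
      linear_combination (1 + |z| + s) ^ 2 * Real.sin_sq_add_cos_sq θ
    have hz := abs_nonneg z
    constructor
    · right
      simp only [Matrix.cons_val_zero, Matrix.cons_val_one, Matrix.cons_val]
      rw [e]
      apply sq_lt_sq'
      · linarith [le_abs_self z]
      · linarith [neg_abs_le z]
    · right
      simp only [Matrix.cons_val_zero, Matrix.cons_val_one, Matrix.cons_val]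
      rw [e]
      apply sq_lt_sq'
      · linarith [neg_abs_le z]
      · linarith [le_abs_self z]

theorem pc_sub {E : Type*} [TopologicalSpace E] (S W : Set E) (hSW : W ⊆ S)
    (h : IsPathConnected W) : IsPathConnected (Subtype.val ⁻¹' W : Set S) := by
  apply h.preimage_coe hSW

/-- If a loop in ℝ³ is disjoint from the unit circle C in the xy-plane and also
disjoint from its open spanning disk D, then it is null-homotopic in ℝ³ \ C. -/
theorem stmt_17
    (C : Set (EuclideanSpace ℝ (Fin 3)))
    (hC : C = {x : EuclideanSpace ℝ (Fin 3) | x 0 ^ 2 + x 1 ^ 2 = 1 ∧ x 2 = 0})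
    (D : Set (EuclideanSpace ℝ (Fin 3)))
    (hD : D = {x : EuclideanSpace ℝ (Fin 3) | x 0 ^ 2 + x 1 ^ 2 < 1 ∧ x 2 = 0})
    (x₀ : ↥(Cᶜ)) (γ : Path x₀ x₀)
    (hdisj : ∀ t : unitInterval, (γ t : EuclideanSpace ℝ (Fin 3)) ∉ D) :
    γ.Homotopic (Path.refl x₀) := by
  have hUC : UU ⊆ Cᶜ := by
    rintro x hx hxC
    rw [hC] at hxC
    obtain ⟨h1, h2⟩ := hxC
    simp [UU, h1, h2] at hx
  have hVC : VV ⊆ Cᶜ := by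
    rintro x hx hxC
    rw [hC] at hxC
    obtain ⟨h1, h2⟩ := hxC
    simp [VV, h1, h2] at hx
  have neU : UU.Nonempty := ⟨_, pcUV.nonempty.some_mem.1⟩
  have neV : VV.Nonempty := ⟨_, pcUV.nonempty.some_mem.2⟩
  have oU : IsOpen UU := by
    exact IsOpen.union (isOpen_lt (f := fun _ : EuclideanSpace ℝ (Fin 3) => (0 : ℝ)) (g := fun x => x 2) (by fun_prop) (by fun_prop))
      (isOpen_lt (f := fun x : EuclideanSpace ℝ (Fin 3) => (1 - x 2) ^ 2)
        (g := fun x => x 0 ^ 2 + x 1 ^ 2) (by fun_prop) (by fun_prop))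
  have oV : IsOpen VV := by
    exact IsOpen.union (isOpen_lt (f := fun x : EuclideanSpace ℝ (Fin 3) => x 2) (g := fun _ => (0 : ℝ)) (by fun_prop) (by fun_prop))
      (isOpen_lt (f := fun x : EuclideanSpace ℝ (Fin 3) => (1 + x 2) ^ 2)
        (g := fun x => x 0 ^ 2 + x 1 ^ 2) (by fun_prop) (by fun_prop))
  refine vk_loop (Subtype.val ⁻¹' UU) (Subtype.val ⁻¹' VV)
    (oU.preimage continuous_subtype_val) (oV.preimage continuous_subtype_val)
    (fun a b p q hp hq => thin_of_starConvex _ _ hUC _ starUU a b p q hp hq)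
    (fun a b p q hp hq => thin_of_starConvex _ _ hVC _ starVV a b p q hp hq)
    (pc_sub _ _ hUC (starUU.isPathConnected (starUU.mem neU))) (pc_sub _ _ hVC (starVV.isPathConnected (starVV.mem neV)))
    (pc_sub _ (UU ∩ VV) (fun x hx => hUC hx.1) pcUV) x₀ γ ?_
  intro t
  have h1 := hdisj t
  have h2 : (γ t : EuclideanSpace ℝ (Fin 3)) ∉
      {x : EuclideanSpace ℝ (Fin 3) | x 0 ^ 2 + x 1 ^ 2 = 1 ∧ x 2 = 0} :=
    fun h => (γ t).2 (hC.symm.subset h)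
  rw [hD] at h1
  simp only [Set.mem_compl_iff, Set.mem_ofPred_eq, not_and] at h1 h2
  rcases lt_trichotomy ((γ t : EuclideanSpace ℝ (Fin 3)) 2) 0 with h | h | h
  · right; left; exact h
  · left; right
    rw [h]
    rcases lt_trichotomy ((γ t : EuclideanSpace ℝ (Fin 3)) 0 ^ 2 +
      (γ t : EuclideanSpace ℝ (Fin 3)) 1 ^ 2) 1 with h' | h' | h'
    · exact absurd h (h1 h')
    · exact absurd h (h2 h')
    · simpa using h'
  · left; left; exact h
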